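/- arXiv:1810.02307 — 6 statements merged into one kernel-verified Lean document; each statement's English description precedes it below -/
import Mathlib

section
/- For every n ≥ 1 and symmetric matrix Q ∈ ℝ^{n×n}, let γ₀ = min over all pairs (i,j) with 1 ≤ i ≤ j ≤ n of Q_{ij}, and suppose Q_{kk} > γ₀ for every k = 1,…,n. Then ν(Q) ≥ γ₀ + 1 / (Σ_{k=1}^n 1/(Q_{kk} − γ₀)). -/
open Matrix

/-- The unit simplex `Δ_n` is `stdSimplex ℝ (Fin n)`.
`nu n Q` is the minimum of `xᵀQx` over the unit simplex (the infimum, which is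
attained since the simplex is compact and the quadratic form is continuous). -/
noncomputable def nu (n : ℕ) (Q : Matrix (Fin n) (Fin n) ℝ) : ℝ :=
  sInf ((fun x : Fin n → ℝ => x ⬝ᵥ Q.mulVec x) '' stdSimplex ℝ (Fin n))

/-!
A quadratic form is monotone in the entries of its matrix on the nonnegative orthant, and `Q`
dominates entrywise the matrix with constant entry `γ₀` plus the diagonal matrix with entries
`Q k k - γ₀`. On the simplex, the form of the latter is `γ₀ + ∑ k, (Q k k - γ₀) * x k ^ 2`, and
Cauchy–Schwarz bounds the sum of squares below by `1 / ∑ k, 1 / (Q k k - γ₀)`.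
-/

section QuadraticForm

variable {ι R : Type*} [Fintype ι]

theorem dotProduct_mulVec_le_of_entrywise_le [Semiring R] [PartialOrder R] [IsOrderedRing R]
    {A B : Matrix ι ι R} (hAB : ∀ i j, A i j ≤ B i j) {x : ι → R} (hx : 0 ≤ x) :
    x ⬝ᵥ A *ᵥ x ≤ x ⬝ᵥ B *ᵥ x :=
  dotProduct_le_dotProduct_of_nonneg_left
    (fun i => dotProduct_le_dotProduct_of_nonneg_right (hAB i) hx) hx

theorem dotProduct_const_add_diagonal_mulVec [CommSemiring R] [DecidableEq ι]
    (c : R) (d x : ι → R) :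
    x ⬝ᵥ (of (fun _ _ => c) + diagonal d) *ᵥ x = c * (∑ i, x i) ^ 2 + ∑ i, d i * x i ^ 2 := by
  have hconst : x ⬝ᵥ (of fun _ _ => c) *ᵥ x = c * (∑ i, x i) ^ 2 := by
    simp only [dotProduct, mulVec, of_apply, ← Finset.mul_sum, ← Finset.sum_mul]
    ring
  have hdiagonal : x ⬝ᵥ diagonal d *ᵥ x = ∑ i, d i * x i ^ 2 := by
    simp only [dotProduct, mulVec_diagonal]
    exact Finset.sum_congr rfl fun i _ => by ring
  rw [add_mulVec, dotProduct_add, hconst, hdiagonal]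

end QuadraticForm

theorem sq_sum_div_sum_one_div_le_sum_mul_sq {ι 𝕜 : Type*} [Semifield 𝕜] [LinearOrder 𝕜]
    [IsStrictOrderedRing 𝕜] [ExistsAddOfLE 𝕜] (s : Finset ι) {d : ι → 𝕜}
    (hd : ∀ i ∈ s, 0 < d i) (x : ι → 𝕜) :
    (∑ i ∈ s, x i) ^ 2 / ∑ i ∈ s, 1 / d i ≤ ∑ i ∈ s, d i * x i ^ 2 := by
  simpa only [div_div_eq_mul_div, div_one, mul_comm] using
    Finset.sq_sum_div_le_sum_sq_div s x fun i hi => one_div_pos.2 (hd i hi)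

theorem le_apply_of_isSymm_of_forall_le {ι α : Type*} [LinearOrder ι] [LE α]
    {A : Matrix ι ι α} (hA : A.IsSymm) {c : α} (hc : ∀ i j, i ≤ j → c ≤ A i j) (i j : ι) :
    c ≤ A i j := by
  rcases le_total i j with hij | hji
  · exact hc i j hij
  · exact hA.apply i j ▸ hc j i hji

theorem le_nu {n : ℕ} (hn : 0 < n) {Q : Matrix (Fin n) (Fin n) ℝ} {c : ℝ}
    (hc : ∀ x ∈ stdSimplex ℝ (Fin n), c ≤ x ⬝ᵥ Q *ᵥ x) : c ≤ nu n Q :=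
  le_csInf (Set.Nonempty.image _ ⟨_, single_mem_stdSimplex ℝ ⟨0, hn⟩⟩)
    (Set.forall_mem_image.2 hc)

theorem nu_lower_bound_l1_general {ι 𝕜 : Type*} [Fintype ι] [Field 𝕜] [LinearOrder 𝕜]
    [IsStrictOrderedRing 𝕜] {Q : Matrix ι ι 𝕜} {γ : 𝕜} (hoff : ∀ i j, i ≠ j → γ ≤ Q i j)
    (hdiag : ∀ k, γ < Q k k) {x : ι → 𝕜} (hx : x ∈ stdSimplex 𝕜 ι) :
    γ + 1 / ∑ k, 1 / (Q k k - γ) ≤ x ⬝ᵥ Q *ᵥ x := by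
  classical
  obtain ⟨hx_nonneg, hx_sum⟩ := hx
  have hcauchy : 1 / ∑ k, 1 / (Q k k - γ) ≤ ∑ k, (Q k k - γ) * x k ^ 2 := by
    simpa only [hx_sum, one_pow] using
      sq_sum_div_sum_one_div_le_sum_mul_sq Finset.univ (fun k _ => sub_pos.2 (hdiag k)) x
  have hdominated (i j : ι) :
      (of (fun _ _ => γ) + diagonal fun k => Q k k - γ : Matrix ι ι 𝕜) i j ≤ Q i j := by
    rcases eq_or_ne i j with rfl | hij
    · simp
    · simpa [hij] using hoff i j hij
  calc γ + 1 / ∑ k, 1 / (Q k k - γ)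
      ≤ γ * (∑ k, x k) ^ 2 + ∑ k, (Q k k - γ) * x k ^ 2 := by
        rw [hx_sum, one_pow, mul_one]
        gcongr
    _ = x ⬝ᵥ (of (fun _ _ => γ) + diagonal fun k => Q k k - γ) *ᵥ x :=
        (dotProduct_const_add_diagonal_mulVec γ _ x).symm
    _ ≤ x ⬝ᵥ Q *ᵥ x := dotProduct_mulVec_le_of_entrywise_le hdominated hx_nonneg

/-- With γ₀ the minimum entry of Q (over pairs i ≤ j), if every diagonal entry
strictly exceeds γ₀, then ν(Q) ≥ γ₀ + 1 / (Σ_k 1/(Q_kk − γ₀)). -/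
theorem nu_lower_bound_l1 (n : ℕ) (hn : 1 ≤ n) (Q : Matrix (Fin n) (Fin n) ℝ)
    (hQ : Q.IsSymm) (γ₀ : ℝ)
    (hγ₀ : IsLeast {v : ℝ | ∃ i j : Fin n, i ≤ j ∧ Q i j = v} γ₀)
    (hdiag : ∀ k, γ₀ < Q k k) :
    γ₀ + 1 / ∑ k, 1 / (Q k k - γ₀) ≤ nu n Q :=
  have hle := le_apply_of_isSymm_of_forall_le hQ fun i j hij => hγ₀.2 ⟨i, j, hij, rfl⟩
  le_nu hn fun _ hx => nu_lower_bound_l1_general (fun i j _ => hle i j) hdiag hx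
end

section
/- For every n ≥ 1 and symmetric matrix Q ∈ ℝ^{n×n}: (a) for every x ∈ Δ_n, max_{j ∈ P(x)} (Qx)_j ≥ ν(Q), where P(x) = {j : x_j > 0}; and (b) there exists x* ∈ Δ_n with max_{j ∈ P(x*)} (Qx*)_j = ν(Q). In other words, ν(Q) = min_{x ∈ Δ_n} max_{j ∈ P(x)} (Qx)_j, and this minimum is attained. -/
open Matrix

/-!
Averaging `(Q x)ⱼ` with the weights `x` gives `xᵀ Q x`, so the largest `(Q x)ⱼ` over the support of
`x` is at least `xᵀ Q x ≥ ν(Q)`. Conversely, at a minimizer `x` of the quadratic form, moving from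
`x` towards a vertex of the simplex cannot decrease the form to first order, which says
`xᵀ Q x ≤ (Q x)ⱼ` for every `j`. As `xᵀ Q x` is the average of these numbers, equality holds
wherever `x` has positive weight.
-/

section OrderedField

variable {𝕜 : Type*} [Field 𝕜] [LinearOrder 𝕜] [IsStrictOrderedRing 𝕜]

theorem nonneg_of_forall_nonneg_add_mul {a c : 𝕜}
    (h : ∀ t : 𝕜, 0 < t → t ≤ 1 → 0 ≤ a + t * c) : 0 ≤ a := by
  by_contra! ha
  have hac : 0 ≤ a + c := by simpa only [one_mul] using h 1 one_pos le_rfl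
  have hc : 0 < c := by linarith
  have hhalf : 0 ≤ a + -a / (2 * c) * c :=
    h (-a / (2 * c)) (div_pos (neg_pos.2 ha) (by positivity))
      ((div_le_one (by positivity)).2 (by linarith))
  have hval : a + -a / (2 * c) * c = a / 2 := by field_simp; ring
  linarith

theorem bilin_self_le_of_isMinOn {E : Type*} [AddCommGroup E] [Module 𝕜 E]
    {B : LinearMap.BilinForm 𝕜 E} (hB : B.IsSymm) {s : Set E} (hs : Convex 𝕜 s) {x y : E}
    (hx : x ∈ s) (hy : y ∈ s) (hmin : IsMinOn (fun z => B z z) s x) : B x x ≤ B x y := by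
  have expand (t : 𝕜) : B (x + t • (y - x)) (x + t • (y - x)) =
      B x x + t * (2 * B x (y - x) + t * B (y - x) (y - x)) := by
    simp only [map_add, map_smul, LinearMap.add_apply, LinearMap.smul_apply, smul_eq_mul,
      hB.eq (y - x) x]
    ring
  have slope_nonneg : 0 ≤ 2 * B x (y - x) := by
    refine nonneg_of_forall_nonneg_add_mul (c := B (y - x) (y - x)) fun t ht ht1 => ?_
    have hle : B x x ≤ B (x + t • (y - x)) (x + t • (y - x)) :=
      hmin (hs.add_smul_sub_mem hx hy ⟨ht.le, ht1⟩)
    rw [expand, le_add_iff_nonneg_right] at hle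
    exact nonneg_of_mul_nonneg_right hle ht
  rw [map_sub] at slope_nonneg
  linarith

end OrderedField

section StdSimplex

variable {ι : Type*} [Fintype ι]

section OrderedRing

variable {R : Type*} [Ring R] [LinearOrder R] [IsStrictOrderedRing R] {x v : ι → R}

theorem exists_pos_of_mem_stdSimplex (hx : x ∈ stdSimplex R ι) : ∃ j, 0 < x j := by
  obtain ⟨j, -, hj⟩ := Finset.exists_lt_of_sum_lt (s := Finset.univ) (f := 0) (g := x)
    (by simp [hx.2])
  exact ⟨j, hj⟩

theorem dotProduct_le_of_forall_pos {c : R} (hx : x ∈ stdSimplex R ι)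
    (h : ∀ j, 0 < x j → v j ≤ c) : x ⬝ᵥ v ≤ c := by
  calc
    ∑ j, x j * v j ≤ ∑ j, x j * c := Finset.sum_le_sum fun j _ => by
      rcases (hx.1 j).eq_or_lt with hj | hj
      · simp [← hj]
      · exact mul_le_mul_of_nonneg_left (h j hj) hj.le
    _ = c := by rw [← Finset.sum_mul, hx.2, one_mul]

theorem apply_eq_dotProduct_of_pos (hx : x ∈ stdSimplex R ι) (h : ∀ j, x ⬝ᵥ v ≤ v j) {j : ι}
    (hj : 0 < x j) : v j = x ⬝ᵥ v := by
  have excess_sum : ∑ i, x i * (v i - x ⬝ᵥ v) = 0 := by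
    simp only [mul_sub, Finset.sum_sub_distrib, ← Finset.sum_mul, hx.2, one_mul]
    exact sub_self _
  have excess_eq_zero : x j * (v j - x ⬝ᵥ v) = 0 :=
    (Finset.sum_eq_zero_iff_of_nonneg fun i _ => mul_nonneg (hx.1 i) (sub_nonneg.2 (h i))).1
      excess_sum j (Finset.mem_univ j)
  exact sub_eq_zero.1 ((mul_eq_zero.1 excess_eq_zero).resolve_left hj.ne')

end OrderedRing

theorem dotProduct_le_sSup_image_pos {x : ι → ℝ} (hx : x ∈ stdSimplex ℝ ι) (v : ι → ℝ) :
    x ⬝ᵥ v ≤ sSup (v '' {j | 0 < x j}) :=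
  dotProduct_le_of_forall_pos hx fun _ hj =>
    le_csSup (Set.toFinite _).bddAbove (Set.mem_image_of_mem v hj)

theorem sSup_image_pos_eq_dotProduct {x v : ι → ℝ} (hx : x ∈ stdSimplex ℝ ι)
    (h : ∀ j, x ⬝ᵥ v ≤ v j) : sSup (v '' {j | 0 < x j}) = x ⬝ᵥ v := by
  refine le_antisymm (csSup_le (Set.Nonempty.image v (exists_pos_of_mem_stdSimplex hx)) ?_)
    (dotProduct_le_sSup_image_pos hx v)
  rintro _ ⟨j, hj, rfl⟩
  exact (apply_eq_dotProduct_of_pos hx h hj).le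

theorem dotProduct_mulVec_le_mulVec_apply_of_isMinOn_stdSimplex {𝕜 : Type*} [Field 𝕜]
    [LinearOrder 𝕜] [IsStrictOrderedRing 𝕜] {Q : Matrix ι ι 𝕜} (hQ : Q.IsSymm) {x : ι → 𝕜}
    (hx : x ∈ stdSimplex 𝕜 ι) (hmin : IsMinOn (fun y => y ⬝ᵥ Q *ᵥ y) (stdSimplex 𝕜 ι) x) (j : ι) :
    x ⬝ᵥ Q *ᵥ x ≤ (Q *ᵥ x) j := by
  classical
  have hB : Q.toBilin'.IsSymm := isSymm_toBilin'_iff_isSymm.2 hQ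
  have hle : Q.toBilin' x x ≤ Q.toBilin' x (Pi.single j 1) :=
    bilin_self_le_of_isMinOn hB (convex_stdSimplex 𝕜 ι) hx (single_mem_stdSimplex 𝕜 j)
      (by simpa only [toBilin'_apply'] using hmin)
  rw [hB.eq x (Pi.single j 1)] at hle
  simpa only [toBilin'_apply', single_one_dotProduct] using hle

theorem continuous_dotProduct_mulVec_self {R : Type*} [NonUnitalNonAssocSemiring R]
    [TopologicalSpace R] [IsTopologicalSemiring R] (Q : Matrix ι ι R) :
    Continuous fun x : ι → R => x ⬝ᵥ Q *ᵥ x :=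
  continuous_id.dotProduct (continuous_const.matrix_mulVec continuous_id)

theorem nu_minimax_characterization_general [Nonempty ι] {Q : Matrix ι ι ℝ} (hQ : Q.IsSymm) :
    (∀ x ∈ stdSimplex ℝ ι, sInf ((fun y => y ⬝ᵥ Q *ᵥ y) '' stdSimplex ℝ ι) ≤
        sSup ((Q *ᵥ x) '' {j | 0 < x j})) ∧
    (∃ x ∈ stdSimplex ℝ ι, sSup ((Q *ᵥ x) '' {j | 0 < x j}) =
        sInf ((fun y => y ⬝ᵥ Q *ᵥ y) '' stdSimplex ℝ ι)) := by
  classical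
  have hcompact : IsCompact (stdSimplex ℝ ι) := isCompact_stdSimplex ℝ ι
  have hcont : ContinuousOn (fun y => y ⬝ᵥ Q *ᵥ y) (stdSimplex ℝ ι) :=
    (continuous_dotProduct_mulVec_self Q).continuousOn
  have hne : (stdSimplex ℝ ι).Nonempty := ⟨_, single_mem_stdSimplex ℝ (Classical.arbitrary ι)⟩
  obtain ⟨x, hx, hval, hmin⟩ := hcompact.exists_sInf_image_eq_and_le hne hcont
  refine ⟨fun y hy => ?_, x, hx, ?_⟩
  · exact hval.trans_le ((hmin y hy).trans (dotProduct_le_sSup_image_pos hy _))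
  · rw [hval]
    exact sSup_image_pos_eq_dotProduct hx
      (dotProduct_mulVec_le_mulVec_apply_of_isMinOn_stdSimplex hQ hx hmin)

end StdSimplex

/-- ν(Q) = min over x ∈ Δ_n of max over the support of x of (Qx)_j, and the
minimum is attained. -/
theorem nu_minimax_characterization (n : ℕ) (hn : 1 ≤ n)
    (Q : Matrix (Fin n) (Fin n) ℝ) (hQ : Q.IsSymm) :
    (∀ x ∈ stdSimplex ℝ (Fin n),
        nu n Q ≤ sSup {v : ℝ | ∃ j, 0 < x j ∧ Q.mulVec x j = v}) ∧
    (∃ x ∈ stdSimplex ℝ (Fin n),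
        sSup {v : ℝ | ∃ j, 0 < x j ∧ Q.mulVec x j = v} = nu n Q) := by
  have : Nonempty (Fin n) := ⟨⟨0, hn⟩⟩
  exact nu_minimax_characterization_general hQ
end

section
/- For every n ≥ 1, symmetric matrix Q ∈ ℝ^{n×n}, x ∈ Δ_n, index j ∈ {1,…,n}, and real number ℓ with ℓ ≤ ν(Q), one has (Qx)_j − xᵀQx ≤ max_{i = 1,…,n} Q_{ij} − ℓ. Consequently the big-M values M_j = max_{i} Q_{ij} − ℓ are valid upper bounds on the quantities z_j = max(0, (Qx)_j − α) whenever α ≥ xᵀQx. -/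
open Matrix

/-!
Since `(Qx)_j` is an average of the entries of row `j`, which by symmetry is column `j`, it is at
most their maximum, while `ℓ ≤ xᵀQx`. The big-M value is nonnegative because `Q_jj` is the value of
the quadratic form at the vertex `e_j`, so that `ℓ ≤ Q_jj`.
-/

section OrderedRing

variable {ι R : Type*} [Fintype ι]

theorem dotProduct_le_of_mem_stdSimplex [Semiring R] [PartialOrder R] [IsOrderedRing R]
    {v x : ι → R} {M : R} (hv : ∀ i, v i ≤ M) (hx : x ∈ stdSimplex R ι) : v ⬝ᵥ x ≤ M :=
  calc
    v ⬝ᵥ x ≤ (fun _ => M) ⬝ᵥ x := dotProduct_le_dotProduct_of_nonneg_right hv hx.1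
    _ = M := by simp only [dotProduct, ← Finset.mul_sum, hx.2, mul_one]

theorem le_diag_of_forall_mem_stdSimplex_le [Semiring R] [PartialOrder R] [ZeroLEOneClass R]
    {Q : Matrix ι ι R} {ℓ : R} (hℓ : ∀ y ∈ stdSimplex R ι, ℓ ≤ y ⬝ᵥ Q *ᵥ y) (j : ι) :
    ℓ ≤ Q j j := by
  classical
  simpa using hℓ _ (single_mem_stdSimplex R j)

theorem bigM_bound_valid_general [Ring R] [LinearOrder R] [IsOrderedRing R] {Q : Matrix ι ι R}
    {x : ι → R} (hx : x ∈ stdSimplex R ι) (j : ι) {ℓ : R}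
    (hℓ : ∀ y ∈ stdSimplex R ι, ℓ ≤ y ⬝ᵥ Q *ᵥ y) :
    (Q *ᵥ x) j - x ⬝ᵥ Q *ᵥ x ≤
      Finset.univ.sup' ⟨j, Finset.mem_univ j⟩ (fun i => Q j i) - ℓ ∧
    ∀ α : R, x ⬝ᵥ Q *ᵥ x ≤ α →
      max 0 ((Q *ᵥ x) j - α) ≤
        Finset.univ.sup' ⟨j, Finset.mem_univ j⟩ (fun i => Q j i) - ℓ := by
  have entry_le_sup (i : ι) : Q j i ≤ Finset.univ.sup' ⟨j, Finset.mem_univ j⟩ (fun i => Q j i) :=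
    Finset.le_sup' (fun i => Q j i) (Finset.mem_univ i)
  have mulVec_le_sup : (Q *ᵥ x) j ≤ Finset.univ.sup' ⟨j, Finset.mem_univ j⟩ (fun i => Q j i) :=
    dotProduct_le_of_mem_stdSimplex entry_le_sup hx
  have le_diag : ℓ ≤ Q j j := le_diag_of_forall_mem_stdSimplex_le hℓ j
  exact ⟨sub_le_sub mulVec_le_sup (hℓ x hx), fun α hα =>
    max_le (sub_nonneg.mpr (le_diag.trans (entry_le_sup j)))
      (sub_le_sub mulVec_le_sup ((hℓ x hx).trans hα))⟩

end OrderedRing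

theorem nu_le_dotProduct_mulVec {n : ℕ} (Q : Matrix (Fin n) (Fin n) ℝ) {x : Fin n → ℝ}
    (hx : x ∈ stdSimplex ℝ (Fin n)) : nu n Q ≤ x ⬝ᵥ Q *ᵥ x := by
  have form_continuous : Continuous fun y : Fin n → ℝ => y ⬝ᵥ Q *ᵥ y := by fun_prop
  exact csInf_le ((isCompact_stdSimplex ℝ (Fin n)).image form_continuous).bddBelow ⟨x, hx, rfl⟩

/-- If ℓ ≤ ν(Q), then for any x ∈ Δ_n and index j,
(Qx)_j − xᵀQx ≤ max_i Q i j − ℓ; consequently max(0, (Qx)_j − α) ≤ max_i Q i j − ℓ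
whenever α ≥ xᵀQx. -/
theorem bigM_bound_valid (n : ℕ) (hn : 1 ≤ n)
    (Q : Matrix (Fin n) (Fin n) ℝ) (hQ : Q.IsSymm)
    (x : Fin n → ℝ) (hx : x ∈ stdSimplex ℝ (Fin n)) (j : Fin n)
    (ℓ : ℝ) (hℓ : ℓ ≤ nu n Q) :
    Q.mulVec x j - x ⬝ᵥ Q.mulVec x ≤
      Finset.univ.sup' (Finset.univ_nonempty_iff.mpr ⟨⟨0, hn⟩⟩) (fun i => Q i j) - ℓ ∧
    ∀ α : ℝ, x ⬝ᵥ Q.mulVec x ≤ α →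
      max 0 (Q.mulVec x j - α) ≤
        Finset.univ.sup' (Finset.univ_nonempty_iff.mpr ⟨⟨0, hn⟩⟩) (fun i => Q i j) - ℓ := by
  simpa only [hQ.apply j] using
    bigM_bound_valid_general hx j fun y hy => hℓ.trans (nu_le_dotProduct_mulVec Q hy)
end

section
/- For every n ≥ 1 and symmetric matrix Q ∈ ℝ^{n×n}, suppose x ∈ Δ_n is a KKT point with multiplier λ ∈ ℝ and slack s ∈ ℝ^n (i.e., s ≥ 0, Qx = λe + s, x_j·s_j = 0 for all j) and ℓ ∈ ℝ satisfies ℓ ≤ ν(Q). Then for every j ∈ {1,…,n}, s_j ≤ max_{i = 1,…,n} Q_{ij} − ℓ; that is, M_j = max_i Q_{ij} − ℓ is a valid big-M bound in the KKT-based mixed integer linear programming formulation. -/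
open Matrix

/-!
Pairing `Qx = λe + s` with `x` kills the slack by complementarity, so `λ = xᵀQx ≥ ν(Q) ≥ ℓ`.
Since `(Qx)_j` is a convex combination of the entries of row `j` of `Q`, it is at most their
maximum, and `s_j = (Qx)_j - λ`.
-/

section StdSimplex

variable {ι R : Type*} [Fintype ι]

theorem dotProduct_le_sup'_of_mem_stdSimplex [Nonempty ι]
    [Semiring R] [LinearOrder R] [IsOrderedRing R]
    {x : ι → R} (hx : x ∈ stdSimplex R ι) (v : ι → R) :
    v ⬝ᵥ x ≤ Finset.univ.sup' Finset.univ_nonempty v :=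
  calc
    v ⬝ᵥ x ≤ (fun _ => Finset.univ.sup' Finset.univ_nonempty v) ⬝ᵥ x :=
      dotProduct_le_dotProduct_of_nonneg_right (fun i => Finset.le_sup' v (Finset.mem_univ i)) hx.1
    _ = Finset.univ.sup' Finset.univ_nonempty v := by
      rw [dotProduct, ← Finset.mul_sum, hx.2, mul_one]

theorem dotProduct_eq_of_complementary [NonAssocSemiring R] {x v s : ι → R} {c : R}
    (hsum : ∑ i, x i = 1) (hv : ∀ i, v i = c + s i) (hcomp : ∀ i, x i * s i = 0) :
    x ⬝ᵥ v = c :=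
  calc
    x ⬝ᵥ v = ∑ i, x i * c :=
      Finset.sum_congr rfl fun i _ => by rw [hv, mul_add, hcomp, add_zero]
    _ = c := by rw [← Finset.sum_mul, hsum, one_mul]

end StdSimplex

theorem slack_bigM_bound_general {ι R : Type*} [Fintype ι] [Nonempty ι]
    [Ring R] [LinearOrder R] [IsOrderedRing R]
    {Q : Matrix ι ι R} {x s : ι → R} {lam ℓ : R} (hx : x ∈ stdSimplex R ι)
    (heq : ∀ j, (Q *ᵥ x) j = lam + s j) (hcomp : ∀ j, x j * s j = 0)
    (hℓ : ℓ ≤ x ⬝ᵥ Q *ᵥ x) (j : ι) :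
    s j ≤ Finset.univ.sup' Finset.univ_nonempty (Q j) - ℓ := by
  have hlam : x ⬝ᵥ Q *ᵥ x = lam := dotProduct_eq_of_complementary hx.2 heq hcomp
  calc
    s j = (Q *ᵥ x) j - lam := by rw [heq, add_sub_cancel_left]
    _ ≤ Finset.univ.sup' Finset.univ_nonempty (Q j) - ℓ :=
      sub_le_sub (dotProduct_le_sup'_of_mem_stdSimplex hx (Q j)) (hlam ▸ hℓ)

/-- At a KKT point with slack s, and for any lower bound ℓ ≤ ν(Q), the slack
satisfies s_j ≤ max_i Q i j − ℓ for every j. -/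
theorem slack_bigM_bound (n : ℕ) (hn : 1 ≤ n)
    (Q : Matrix (Fin n) (Fin n) ℝ) (hQ : Q.IsSymm)
    (x : Fin n → ℝ) (hx : x ∈ stdSimplex ℝ (Fin n))
    (lam : ℝ) (s : Fin n → ℝ) (hs : ∀ j, 0 ≤ s j)
    (heq : ∀ j, Q.mulVec x j = lam + s j)
    (hcomp : ∀ j, x j * s j = 0)
    (ℓ : ℝ) (hℓ : ℓ ≤ nu n Q) :
    ∀ j, s j ≤ Finset.univ.sup' (Finset.univ_nonempty_iff.mpr ⟨⟨0, hn⟩⟩) (fun i => Q i j) - ℓ := by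
  have : Nonempty (Fin n) := ⟨⟨0, hn⟩⟩
  intro j
  have hrow : Q j = fun i => Q i j := funext fun i => hQ.apply i j
  exact hrow ▸ slack_bigM_bound_general hx heq hcomp (hℓ.trans (nu_le_dotProduct_mulVec Q hx)) j
end

section
/- For every n ≥ 1 and symmetric matrix Q ∈ ℝ^{n×n}, there exists a global minimizer x* ∈ Δ_n of xᵀQx over Δ_n (i.e., (x*)ᵀQx* = ν(Q)) such that the support of x* forms a clique in the convexity graph of Q; that is, for every pair of distinct indices i, j in P(x*) = {k : x*_k > 0}, one has Q_{ii} + Q_{jj} − 2Q_{ij} > 0. -/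
open Matrix

/-!
If a quadratic form is not strictly convex along the simplex edge between `e_i` and `e_j`, then on
the line through `x` in the direction `e_i - e_j` it is concave, so it does not increase when one
moves from `x` in one of the two senses of that line. Going that way until coordinate `i` or `j`
vanishes strictly shrinks the support. Hence every point of the simplex is dominated by one whose
support is a clique, and a minimizer is dominated only by minimizers.
-/

open Function (support)
open QuadraticMap (polar)

section MassTransfer

variable {ι R : Type*} [DecidableEq ι]

/-- The vector obtained from `x` by transferring the whole mass `x j` of coordinate `j` to
coordinate `i`. It is written as a displacement along `e_i - e_j` so that quadratic forms can be
expanded at `x`. -/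
def transferMass [Ring R] (x : ι → R) (i j : ι) : ι → R :=
  x + x j • (Pi.single i 1 - Pi.single j 1)

lemma support_transferMass_ssubset [Ring R] {x : ι → R} {i j : ι} (hij : i ≠ j) (hi : x i ≠ 0)
    (hj : x j ≠ 0) : support (transferMass x i j) ⊂ support x := by
  have hvanish : transferMass x i j j = 0 := by simp [transferMass, hij.symm]
  refine (Set.ssubset_iff_of_subset fun k hk => ?_).2 ⟨j, hj, by simpa using hvanish⟩
  obtain rfl | hki := eq_or_ne k i
  · exact hi
  obtain rfl | hkj := eq_or_ne k j
  · exact hj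
  simpa [transferMass, hki, hkj] using hk

lemma transferMass_mem_stdSimplex [Ring R] [PartialOrder R] [IsOrderedAddMonoid R] [Fintype ι]
    {x : ι → R} (hx : x ∈ stdSimplex R ι) (i j : ι) : transferMass x i j ∈ stdSimplex R ι := by
  refine ⟨fun k => ?_, by simp [transferMass, Finset.sum_add_distrib, ← Finset.mul_sum, hx.2]⟩
  have hk := hx.1 k
  have hj := hx.1 j
  obtain rfl | hkj := eq_or_ne k j <;> obtain rfl | hki := eq_or_ne k i <;>
    simp [transferMass, *, add_nonneg]

lemma map_transferMass [CommRing R] (q : QuadraticForm R (ι → R)) (x : ι → R) (i j : ι) :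
    q (transferMass x i j) = q x + x j * x j * q (Pi.single i 1 - Pi.single j 1)
      + x j * polar q x (Pi.single i 1 - Pi.single j 1) := by
  simp only [transferMass, QuadraticMap.map_add q, QuadraticMap.map_smul,
    QuadraticMap.polar_smul_right, smul_eq_mul]

lemma map_transferMass_le [CommRing R] [PartialOrder R] [IsOrderedRing R]
    {q : QuadraticForm R (ι → R)} {x : ι → R} {i j : ι} (hj : 0 ≤ x j)
    (hcurv : q (Pi.single i 1 - Pi.single j 1) ≤ 0)
    (hslope : polar q x (Pi.single i 1 - Pi.single j 1) ≤ 0) :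
    q (transferMass x i j) ≤ q x := by
  rw [map_transferMass, add_assoc, add_le_iff_nonpos_right]
  exact add_nonpos (mul_nonpos_of_nonneg_of_nonpos (mul_nonneg hj hj) hcurv)
    (mul_nonpos_of_nonneg_of_nonpos hj hslope)

lemma map_transferMass_le_or_le [CommRing R] [LinearOrder R] [IsOrderedRing R]
    {q : QuadraticForm R (ι → R)} {x : ι → R} {i j : ι} (hi : 0 ≤ x i) (hj : 0 ≤ x j)
    (hcurv : q (Pi.single i 1 - Pi.single j 1) ≤ 0) :
    q (transferMass x i j) ≤ q x ∨ q (transferMass x j i) ≤ q x := by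
  refine (le_total (polar q x (Pi.single i 1 - Pi.single j 1)) 0).imp
    (map_transferMass_le hj hcurv) fun hslope => map_transferMass_le hi ?_ ?_
  · rwa [QuadraticMap.map_sub]
  · rwa [← neg_sub, QuadraticMap.polar_neg_right, neg_nonpos]

end MassTransfer

section ConvexityGraph

variable {ι R : Type*} [DecidableEq ι] [CommRing R]

/-- The convexity graph of a quadratic form on `ι → R`: distinct `i` and `j` are adjacent when the
form is strictly convex on the simplex edge between `e_i` and `e_j`. Strict convexity along a
direction is encoded as positivity of the form there. -/
def convexityGraph [PartialOrder R] (q : QuadraticForm R (ι → R)) : SimpleGraph ι where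
  Adj i j := i ≠ j ∧ 0 < q (Pi.single i 1 - Pi.single j 1)
  symm := ⟨fun i j ⟨hij, hpos⟩ => ⟨hij.symm, by rwa [QuadraticMap.map_sub]⟩⟩
  loopless := ⟨fun _ h => h.1 rfl⟩

variable [LinearOrder R] [IsOrderedRing R] [Fintype ι]

lemma exists_support_ssubset_of_not_isClique {q : QuadraticForm R (ι → R)} {x : ι → R}
    (hx : x ∈ stdSimplex R ι) (hclique : ¬ (convexityGraph q).IsClique (support x)) :
    ∃ y ∈ stdSimplex R ι, support y ⊂ support x ∧ q y ≤ q x := by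
  obtain ⟨i, hi, j, hj, hij, hadj⟩ : ∃ i ∈ support x, ∃ j ∈ support x, i ≠ j ∧
      ¬ (convexityGraph q).Adj i j := by
    simpa [SimpleGraph.isClique_iff, Set.Pairwise] using hclique
  have hcurv : q (Pi.single i 1 - Pi.single j 1) ≤ 0 := not_lt.1 fun hpos => hadj ⟨hij, hpos⟩
  obtain hle | hle := map_transferMass_le_or_le (hx.1 i) (hx.1 j) hcurv
  · exact ⟨_, transferMass_mem_stdSimplex hx i j, support_transferMass_ssubset hij hi hj, hle⟩
  · exact ⟨_, transferMass_mem_stdSimplex hx j i, support_transferMass_ssubset hij.symm hj hi, hle⟩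

theorem exists_map_le_isClique_support (q : QuadraticForm R (ι → R)) {x : ι → R}
    (hx : x ∈ stdSimplex R ι) :
    ∃ y ∈ stdSimplex R ι, q y ≤ q x ∧ (convexityGraph q).IsClique (support y) := by
  induction hs : support x using WellFoundedLT.induction generalizing x with
  | ind s ih =>
    subst hs
    by_cases hclique : (convexityGraph q).IsClique (support x)
    · exact ⟨x, hx, le_rfl, hclique⟩
    obtain ⟨y, hy, hssub, hyx⟩ := exists_support_ssubset_of_not_isClique hx hclique
    obtain ⟨z, hz, hzy, hzclique⟩ := ih _ hssub hy rfl
    exact ⟨z, hz, hzy.trans hyx, hzclique⟩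

end ConvexityGraph

lemma continuous_quadraticMap {𝕜 E F : Type*} [NontriviallyNormedField 𝕜] [CompleteSpace 𝕜]
    [AddCommGroup E] [TopologicalSpace E] [IsTopologicalAddGroup E] [T2Space E] [Module 𝕜 E]
    [ContinuousSMul 𝕜 E] [FiniteDimensional 𝕜 E] [AddCommGroup F] [TopologicalSpace F]
    [IsTopologicalAddGroup F] [Module 𝕜 F] [ContinuousSMul 𝕜 F] (q : QuadraticMap 𝕜 E F) :
    Continuous q := by
  obtain ⟨B, rfl⟩ := LinearMap.BilinMap.toQuadraticMap_surjective q
  let b := Module.finBasis 𝕜 E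
  have hexpand (x : E) : B x x = ∑ i, b.coord i x • B (b i) x := by
    conv_lhs => rw [← b.sum_repr x, LinearMap.map_sum₂, b.sum_repr]
    simp only [map_smul, LinearMap.smul_apply, Module.Basis.coord_apply]
  refine Continuous.congr (continuous_finsetSum _ fun i _ => ?_) fun x => (hexpand x).symm
  exact (b.coord i).continuous_of_finiteDimensional.smul (B (b i)).continuous_of_finiteDimensional

lemma toQuadraticForm'_apply {ι R : Type*} [Fintype ι] [DecidableEq ι] [CommRing R]
    (Q : Matrix ι ι R) (x : ι → R) : Q.toQuadraticForm' x = x ⬝ᵥ Q *ᵥ x :=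
  toLinearMap₂'_apply' Q x x

lemma toQuadraticForm'_single_sub_single {ι R : Type*} [Fintype ι] [DecidableEq ι] [CommRing R]
    (Q : Matrix ι ι R) (i j : ι) :
    Q.toQuadraticForm' (Pi.single i 1 - Pi.single j 1) = Q i i + Q j j - Q i j - Q j i := by
  simp only [toQuadraticForm'_apply, mulVec_sub, sub_dotProduct, dotProduct_sub, mulVec_single_one,
    single_one_dotProduct, col_apply]
  ring

lemma dotProduct_mulVec_eq_nu_of_isMinOn {n : ℕ} {Q : Matrix (Fin n) (Fin n) ℝ} {x : Fin n → ℝ}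
    (hx : x ∈ stdSimplex ℝ (Fin n))
    (hmin : IsMinOn Q.toQuadraticForm' (stdSimplex ℝ (Fin n)) x) : x ⬝ᵥ Q *ᵥ x = nu n Q := by
  simp only [nu, ← toQuadraticForm'_apply, sInf_image', hmin.iInf_eq hx]

theorem exists_minimizer_support_clique_general {ι : Type*} [Fintype ι] [DecidableEq ι] [Nonempty ι]
    (q : QuadraticForm ℝ (ι → ℝ)) :
    ∃ x ∈ stdSimplex ℝ ι, IsMinOn q (stdSimplex ℝ ι) x ∧
      (convexityGraph q).IsClique (support x) := by
  obtain ⟨x, hx, hmin⟩ := (isCompact_stdSimplex ℝ ι).exists_isMinOn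
    ⟨_, single_mem_stdSimplex ℝ (Classical.arbitrary ι)⟩ (continuous_quadraticMap q).continuousOn
  obtain ⟨y, hy, hyx, hclique⟩ := exists_map_le_isClique_support q hx
  exact ⟨y, hy, fun z hz => hyx.trans (hmin hz), hclique⟩

/-- There exists a global minimizer of (StQP) whose support forms a clique in
the convexity graph of Q: Q_ii + Q_jj − 2 Q_ij > 0 for all distinct i, j in the
support. -/
theorem exists_minimizer_support_clique (n : ℕ) (hn : 1 ≤ n)
    (Q : Matrix (Fin n) (Fin n) ℝ) (hQ : Q.IsSymm) :
    ∃ x ∈ stdSimplex ℝ (Fin n), x ⬝ᵥ Q.mulVec x = nu n Q ∧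
      ∀ i j : Fin n, i ≠ j → 0 < x i → 0 < x j → 0 < Q i i + Q j j - 2 * Q i j := by
  have : Nonempty (Fin n) := ⟨⟨0, hn⟩⟩
  obtain ⟨x, hx, hmin, hclique⟩ := exists_minimizer_support_clique_general Q.toQuadraticForm'
  refine ⟨x, hx, dotProduct_mulVec_eq_nu_of_isMinOn hx hmin, fun i j hij hi hj => ?_⟩
  have hadj := (hclique hi.ne' hj.ne' hij).2
  rw [toQuadraticForm'_single_sub_single, hQ.apply i j] at hadj
  linarith
end

section
/- For every n ≥ 1 and symmetric matrix Q ∈ ℝ^{n×n}, there exists a global minimizer x* ∈ Δ_n of xᵀQx over Δ_n such that for every pair of indices i < j with Q_{ii} + Q_{jj} − 2Q_{ij} ≤ 0, at most one of x*_i and x*_j is strictly positive (i.e., x*_i = 0 or x*_j = 0). Consequently, the inequalities y_i + y_j ≤ 1 for such pairs (where y_k = 1 if x_k > 0 and y_k = 0 otherwise) are valid for the mixed integer linear programming formulations of the standard quadratic program. -/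
open Matrix

/-!
Let `i ≠ j` carry positive weight in `x` and put `d = e_i - e_j`, so that
`dᵀQd = Q_ii + Q_jj - Q_ij - Q_ji`. When this is nonpositive, `t ↦ (x + td)ᵀQ(x + td)` is concave on
the interval `-x_i ≤ t ≤ x_j` on which `x + td` stays in the simplex, hence one of the two endpoints
is at least as good as `x`. At an endpoint the whole weight of one index has been moved onto the
other, so the support has shrunk and the process terminates. Starting from a minimizer, it ends in
a minimizer with the required property.
-/

section MassTransfer

variable {ι R : Type*} [DecidableEq ι] [CommRing R]

/-- The vector obtained from `x` by moving all the weight of the coordinate `j` onto the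
coordinate `i`. It is written as a step along the edge direction `e_i - e_j` of the simplex, so that
quadratic forms can be expanded at `x`; for `i = j` it is `x` itself. -/
def massTransfer (x : ι → R) (i j : ι) : ι → R :=
  x + x j • (Pi.single i 1 - Pi.single j 1)

variable {x : ι → R} {i j k : ι}

lemma massTransfer_apply_target (hij : i ≠ j) : massTransfer x i j i = x i + x j := by
  simp [massTransfer, hij]

lemma massTransfer_apply_source (hij : i ≠ j) : massTransfer x i j j = 0 := by
  simp [massTransfer, hij.symm]

lemma massTransfer_apply_of_ne (hki : k ≠ i) (hkj : k ≠ j) : massTransfer x i j k = x k := by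
  simp [massTransfer, hki, hkj]

lemma support_massTransfer_ssubset (hij : i ≠ j) (hi : x i ≠ 0) (hj : x j ≠ 0) :
    Function.support (massTransfer x i j) ⊂ Function.support x := by
  refine (Set.ssubset_iff_of_subset fun k hk => ?_).mpr
    ⟨j, hj, Function.notMem_support.mpr (massTransfer_apply_source hij)⟩
  obtain rfl | hki := eq_or_ne k i
  · exact hi
  obtain rfl | hkj := eq_or_ne k j
  · exact hj
  rwa [Function.mem_support, massTransfer_apply_of_ne hki hkj] at hk

lemma massTransfer_mem_stdSimplex [PartialOrder R] [IsOrderedRing R] [Fintype ι]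
    (hx : x ∈ stdSimplex R ι) (hij : i ≠ j) : massTransfer x i j ∈ stdSimplex R ι := by
  refine ⟨fun k => ?_, ?_⟩
  · obtain rfl | hki := eq_or_ne k i
    · exact (add_nonneg (hx.1 k) (hx.1 j)).trans_eq (massTransfer_apply_target hij).symm
    obtain rfl | hkj := eq_or_ne k j
    · exact (massTransfer_apply_source hij).ge
    exact (hx.1 k).trans_eq (massTransfer_apply_of_ne hki hkj).symm
  · simp [massTransfer, Finset.sum_add_distrib, ← Finset.mul_sum, hx.2]

end MassTransfer

section QuadraticForm

variable {ι R : Type*} [Fintype ι]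

lemma add_smul_dotProduct_mulVec_add_smul [CommSemiring R] (Q : Matrix ι ι R) (x d : ι → R)
    (t : R) :
    (x + t • d) ⬝ᵥ Q *ᵥ (x + t • d) =
      x ⬝ᵥ Q *ᵥ x + t * (d ⬝ᵥ Q *ᵥ x + x ⬝ᵥ Q *ᵥ d) + t ^ 2 * (d ⬝ᵥ Q *ᵥ d) := by
  simp only [mulVec_add, mulVec_smul, add_dotProduct, dotProduct_add, smul_dotProduct,
    dotProduct_smul, smul_eq_mul]
  ring

lemma single_sub_single_dotProduct_mulVec [DecidableEq ι] [CommRing R] (Q : Matrix ι ι R)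
    (i j : ι) :
    (Pi.single i 1 - Pi.single j 1) ⬝ᵥ Q *ᵥ (Pi.single i 1 - Pi.single j 1) =
      Q i i + Q j j - Q i j - Q j i := by
  simp only [mulVec_sub, mulVec_single_one, sub_dotProduct, dotProduct_sub, single_one_dotProduct,
    col_apply]
  ring

variable [CommRing R] [LinearOrder R] [IsOrderedRing R] (Q : Matrix ι ι R) {x : ι → R}

lemma massTransfer_dotProduct_mulVec_le_or_le [DecidableEq ι] {i j : ι} (hi : 0 ≤ x i)
    (hj : 0 ≤ x j) (hQ : Q i i + Q j j - Q i j - Q j i ≤ 0) :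
    massTransfer x i j ⬝ᵥ Q *ᵥ massTransfer x i j ≤ x ⬝ᵥ Q *ᵥ x ∨
      massTransfer x j i ⬝ᵥ Q *ᵥ massTransfer x j i ≤ x ⬝ᵥ Q *ᵥ x := by
  set d : ι → R := Pi.single i 1 - Pi.single j 1 with hd
  set slope := d ⬝ᵥ Q *ᵥ x + x ⬝ᵥ Q *ᵥ d
  have curvature : d ⬝ᵥ Q *ᵥ d ≤ 0 := (single_sub_single_dotProduct_mulVec Q i j).trans_le hQ
  have le_of_downhill (t : R) (ht : t * slope ≤ 0) :
      (x + t • d) ⬝ᵥ Q *ᵥ (x + t • d) ≤ x ⬝ᵥ Q *ᵥ x := by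
    rw [add_smul_dotProduct_mulVec_add_smul, add_assoc]
    exact add_le_of_nonpos_right
      (add_nonpos ht (mul_nonpos_of_nonneg_of_nonpos (sq_nonneg t) curvature))
  have reverse : massTransfer x j i = x + (-x i) • d := by
    rw [massTransfer, hd, neg_smul, ← smul_neg, neg_sub]
  rcases le_total slope 0 with hslope | hslope
  · exact .inl (le_of_downhill _ (mul_nonpos_of_nonneg_of_nonpos hj hslope))
  · exact .inr (reverse ▸ le_of_downhill _
      (mul_nonpos_of_nonpos_of_nonneg (neg_nonpos.mpr hi) hslope))

theorem exists_mem_stdSimplex_le_and_pairwise_support (hx : x ∈ stdSimplex R ι) :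
    ∃ y ∈ stdSimplex R ι, y ⬝ᵥ Q *ᵥ y ≤ x ⬝ᵥ Q *ᵥ x ∧
      (Function.support y).Pairwise fun i j => 0 < Q i i + Q j j - Q i j - Q j i := by
  classical
  induction hs : Function.support x using WellFoundedLT.induction generalizing x with
  | ind s ih =>
    subst hs
    by_cases hpair : (Function.support x).Pairwise fun i j => 0 < Q i i + Q j j - Q i j - Q j i
    · exact ⟨x, hx, le_rfl, hpair⟩
    obtain ⟨i, j, hij, hi, hj, hle⟩ : ∃ i j, i ≠ j ∧ x i ≠ 0 ∧ x j ≠ 0 ∧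
        massTransfer x i j ⬝ᵥ Q *ᵥ massTransfer x i j ≤ x ⬝ᵥ Q *ᵥ x := by
      simp only [Set.Pairwise, not_forall, not_lt] at hpair
      obtain ⟨i, hi, j, hj, hij, hQ⟩ := hpair
      exact (massTransfer_dotProduct_mulVec_le_or_le Q (hx.1 i) (hx.1 j) hQ).elim
        (⟨i, j, hij, hi, hj, ·⟩) (⟨j, i, hij.symm, hj, hi, ·⟩)
    obtain ⟨y, hy, hyle, hypair⟩ := ih _ (support_massTransfer_ssubset hij hi hj)
      (massTransfer_mem_stdSimplex hx hij) rfl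
    exact ⟨y, hy, hyle.trans hle, hypair⟩

end QuadraticForm

theorem exists_isMinOn_stdSimplex_dotProduct_mulVec {ι : Type*} [Fintype ι] [Nonempty ι]
    (Q : Matrix ι ι ℝ) :
    ∃ x ∈ stdSimplex ℝ ι, IsMinOn (fun y => y ⬝ᵥ Q *ᵥ y) (stdSimplex ℝ ι) x := by
  classical
  exact (isCompact_stdSimplex ℝ ι).exists_isMinOn
    ⟨_, single_mem_stdSimplex ℝ (Classical.arbitrary ι)⟩ (by fun_prop)

lemma dotProduct_mulVec_eq_nu {n : ℕ} {Q : Matrix (Fin n) (Fin n) ℝ} {x : Fin n → ℝ}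
    (hx : x ∈ stdSimplex ℝ (Fin n))
    (hmin : IsMinOn (fun y => y ⬝ᵥ Q *ᵥ y) (stdSimplex ℝ (Fin n)) x) :
    x ⬝ᵥ Q *ᵥ x = nu n Q :=
  have least : IsLeast ((fun y => y ⬝ᵥ Q *ᵥ y) '' stdSimplex ℝ (Fin n)) (x ⬝ᵥ Q *ᵥ x) :=
    ⟨Set.mem_image_of_mem _ hx, Set.forall_mem_image.mpr hmin⟩
  least.csInf_eq.symm

theorem exists_minimizer_valid_inequalities_general {ι : Type*} [Fintype ι] [Nonempty ι]
    (Q : Matrix ι ι ℝ) :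
    ∃ x ∈ stdSimplex ℝ ι, IsMinOn (fun y => y ⬝ᵥ Q *ᵥ y) (stdSimplex ℝ ι) x ∧
      ∀ i j : ι, i ≠ j → Q i i + Q j j - Q i j - Q j i ≤ 0 → x i = 0 ∨ x j = 0 := by
  obtain ⟨x₀, hx₀, hmin⟩ := exists_isMinOn_stdSimplex_dotProduct_mulVec Q
  obtain ⟨x, hx, hle, hpair⟩ := exists_mem_stdSimplex_le_and_pairwise_support Q hx₀
  refine ⟨x, hx, fun y hy => hle.trans (hmin hy), fun i j hij hQij => ?_⟩
  by_contra! hpos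
  exact (hpair hpos.1 hpos.2 hij).not_ge hQij

/-- There exists a global minimizer x* of (StQP) such that for every pair i < j
with Q_ii + Q_jj − 2 Q_ij ≤ 0, at most one of x*_i and x*_j is positive. -/
theorem exists_minimizer_valid_inequalities (n : ℕ) (hn : 1 ≤ n)
    (Q : Matrix (Fin n) (Fin n) ℝ) (hQ : Q.IsSymm) :
    ∃ x ∈ stdSimplex ℝ (Fin n), x ⬝ᵥ Q.mulVec x = nu n Q ∧
      ∀ i j : Fin n, i < j → Q i i + Q j j - 2 * Q i j ≤ 0 → x i = 0 ∨ x j = 0 := by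
  have : Nonempty (Fin n) := ⟨⟨0, hn⟩⟩
  obtain ⟨x, hx, hmin, hzero⟩ := exists_minimizer_valid_inequalities_general Q
  exact ⟨x, hx, dotProduct_mulVec_eq_nu hx hmin,
    fun i j hij hQij => hzero i j hij.ne (by linarith [hQ.apply i j])⟩
end
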